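/- Let M be an η-Einstein Kenmotsu manifold of dimension 2n+1 > 3. If the metric g is a *-Ricci soliton, then M is Einstein with S = -2n g. -/

import Mathlib

/-- An abstract algebraic model of a `(2n+1)`-dimensional Kenmotsu manifold:
`C` plays the role of the ring of smooth functions on the manifold and vector
fields are modelled as `ℝ`-derivations of `C`.  A global orthonormal frame `e`
is included in order to express traces (Ricci tensor, scalar curvature). -/
structure KenmotsuManifold (n : ℕ) (C : Type*) [CommRing C] [Algebra ℝ C] where
  /-- the Riemannian metric -/
  g : Derivation ℝ C C → Derivation ℝ C C → C
  /-- the structure `(1,1)`-tensor field -/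
  φ : Derivation ℝ C C → Derivation ℝ C C
  /-- the Reeb (characteristic) vector field -/
  ξ : Derivation ℝ C C
  /-- the contact `1`-form -/
  η : Derivation ℝ C C → C
  /-- the Levi-Civita connection -/
  nabla : Derivation ℝ C C → Derivation ℝ C C → Derivation ℝ C C
  /-- a global orthonormal frame, used to take traces -/
  e : Fin (2 * n + 1) → Derivation ℝ C C
  g_symm : ∀ X Y, g X Y = g Y X
  g_add_left : ∀ X Y Z, g (X + Y) Z = g X Z + g Y Z
  g_smul_left : ∀ (f : C) (X Y), g (f • X) Y = f * g X Y
  g_nondeg : ∀ X, (∀ Y, g X Y = 0) → X = 0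
  g_frame : ∀ i j, g (e i) (e j) = if i = j then 1 else 0
  frame_span : ∀ X : Derivation ℝ C C, X = ∑ i, g X (e i) • e i
  phi_phi : ∀ X, φ (φ X) = -X + η X • ξ
  phi_linear : ∀ (f : C) (X Y), φ (f • X + Y) = f • φ X + φ Y
  eta_xi : η ξ = 1
  eta_def : ∀ X, η X = g X ξ
  compat_phi : ∀ X Y, g (φ X) (φ Y) = g X Y - η X * η Y
  nabla_add_left : ∀ X Y Z, nabla (X + Y) Z = nabla X Z + nabla Y Z
  nabla_smul_left : ∀ (f : C) (X Y), nabla (f • X) Y = f • nabla X Y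
  nabla_add_right : ∀ X Y Z, nabla X (Y + Z) = nabla X Y + nabla X Z
  nabla_leibniz : ∀ (X) (f : C) (Y), nabla X (f • Y) = X f • Y + f • nabla X Y
  torsion_free : ∀ X Y, nabla X Y - nabla Y X = ⁅X, Y⁆
  metric_compat : ∀ X Y Z, X (g Y Z) = g (nabla X Y) Z + g Y (nabla X Z)
  /-- the Kenmotsu condition `(∇_X φ)Y = g(φX,Y)ξ - η(Y)φX` -/
  kenmotsu : ∀ X Y, nabla X (φ Y) - φ (nabla X Y) = g (φ X) Y • ξ - η Y • φ X

namespace KenmotsuManifold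

variable {n : ℕ} {C : Type*} [CommRing C] [Algebra ℝ C] (K : KenmotsuManifold n C)

/-- the Riemann curvature tensor `R(X,Y)Z = ∇_X∇_Y Z - ∇_Y∇_X Z - ∇_{[X,Y]}Z` -/
def Rm (X Y Z : Derivation ℝ C C) : Derivation ℝ C C :=
  K.nabla X (K.nabla Y Z) - K.nabla Y (K.nabla X Z) - K.nabla ⁅X, Y⁆ Z

/-- the Ricci tensor `S(X,Y) = trace (Z ↦ R(Z,X)Y)` -/
def S (X Y : Derivation ℝ C C) : C := ∑ i, K.g (K.Rm (K.e i) X Y) (K.e i)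

/-- the Ricci operator `Q`, `g(QX,Y) = S(X,Y)` -/
def Q (X : Derivation ℝ C C) : Derivation ℝ C C := ∑ i, K.S X (K.e i) • K.e i

/-- the scalar curvature `r` -/
def r : C := ∑ i, K.S (K.e i) (K.e i)

/-- the `*`-Ricci tensor `S*(X,Y) = (1/2) trace (Z ↦ R(X,φY)φZ)` -/
noncomputable def Sstar (X Y : Derivation ℝ C C) : C :=
  (2 : ℝ)⁻¹ • ∑ i, K.g (K.Rm X (K.φ Y) (K.φ (K.e i))) (K.e i)

/-- the covariant derivative `(∇_X Q)Y` of the Ricci operator -/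
def nablaQ (X Y : Derivation ℝ C C) : Derivation ℝ C C :=
  K.nabla X (K.Q Y) - K.Q (K.nabla X Y)

/-- the Lie derivative `(£_V g)(X,Y)` of the metric -/
def lieG (V X Y : Derivation ℝ C C) : C :=
  V (K.g X Y) - K.g ⁅V, X⁆ Y - K.g X ⁅V, Y⁆

/-- the Lie derivative `(£_V S)(X,Y)` of the Ricci tensor -/
def lieS (V X Y : Derivation ℝ C C) : C :=
  V (K.S X Y) - K.S ⁅V, X⁆ Y - K.S X ⁅V, Y⁆

/-- `g` is a `*`-Ricci soliton with potential vector field `V` and soliton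
constant `l`: `£_V g + 2S* + 2l g = 0`. -/
def IsStarRicciSoliton (V : Derivation ℝ C C) (l : ℝ) : Prop :=
  ∀ X Y, K.lieG V X Y + 2 * K.Sstar X Y + (2 * l) • K.g X Y = 0

/-- `g` is a gradient almost `*`-Ricci soliton with potential function `f`
(with gradient `F`, i.e. `g(F,X) = Xf`) and soliton function `l`:
`Hess f + S* + l g = 0`. -/
def IsGradAlmostStarRicciSoliton (f : C) (F : Derivation ℝ C C) (l : C) : Prop :=
  (∀ X, K.g F X = X f) ∧ ∀ X Y, K.g (K.nabla X F) Y + K.Sstar X Y + l * K.g X Y = 0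

/-- `M` is `η`-Einstein: `S = α g + β η⊗η`. -/
def IsEtaEinstein : Prop :=
  ∃ α β : C, ∀ X Y, K.S X Y = α * K.g X Y + β * (K.η X * K.η Y)

end KenmotsuManifold

namespace KenmotsuManifold

section Aux
variable {n : ℕ} {C : Type*} [CommRing C] [Algebra ℝ C] (K : KenmotsuManifold n C)

theorem nat_cancel {C : Type*} [CommRing C] [Algebra ℝ C] (k : ℕ) (hk : k ≠ 0) (a : C)
    (h : (k : C) * a = 0) : a = 0 := by
  have h1 : (algebraMap ℝ C ((k : ℝ)⁻¹)) * (k : C) = 1 := by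
    rw [← map_natCast (algebraMap ℝ C) k, ← map_mul, inv_mul_cancel₀ (by exact_mod_cast hk), map_one]
  calc a = (algebraMap ℝ C ((k : ℝ)⁻¹)) * (k : C) * a := by rw [h1, one_mul]
    _ = 0 := by rw [mul_assoc, h, mul_zero]

theorem two_cancel {C : Type*} [CommRing C] [Algebra ℝ C] (a : C)
    (h : 2 * a = 0) : a = 0 := nat_cancel 2 (by norm_num) a (by exact_mod_cast h)

theorem bracket_smul_right (X Y : Derivation ℝ C C) (f : C) :
    ⁅X, f • Y⁆ = X f • Y + f • ⁅X, Y⁆ := by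
  ext a
  simp [Derivation.commutator_apply]
  ring

theorem bracket_smul_left (X Y : Derivation ℝ C C) (f : C) :
    ⁅f • X, Y⁆ = f • ⁅X, Y⁆ - Y f • X := by
  ext a
  simp [Derivation.commutator_apply]
  ring

theorem der_mul (X : Derivation ℝ C C) (a b : C) : X (a * b) = a * X b + b * X a := by
  simp

theorem g_add_right (X Y Z : Derivation ℝ C C) : K.g X (Y + Z) = K.g X Y + K.g X Z := by
  rw [K.g_symm, K.g_add_left, K.g_symm Y, K.g_symm Z]

theorem g_smul_right (f : C) (X Y : Derivation ℝ C C) : K.g X (f • Y) = f * K.g X Y := by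
  rw [K.g_symm, K.g_smul_left, K.g_symm Y]

theorem g_zero_left (Y : Derivation ℝ C C) : K.g 0 Y = 0 := by
  have := K.g_smul_left 0 0 Y
  simpa using this

theorem g_zero_right (Y : Derivation ℝ C C) : K.g Y 0 = 0 := by
  rw [K.g_symm, g_zero_left]

theorem g_neg_left (X Y : Derivation ℝ C C) : K.g (-X) Y = - K.g X Y := by
  have := K.g_smul_left (-1) X Y
  simpa using this

theorem g_neg_right (X Y : Derivation ℝ C C) : K.g X (-Y) = - K.g X Y := by
  rw [K.g_symm, g_neg_left, K.g_symm]

theorem g_sub_left (X Y Z : Derivation ℝ C C) : K.g (X - Y) Z = K.g X Z - K.g Y Z := by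
  rw [sub_eq_add_neg, K.g_add_left, g_neg_left, sub_eq_add_neg]

theorem g_sub_right (X Y Z : Derivation ℝ C C) : K.g X (Y - Z) = K.g X Y - K.g X Z := by
  rw [sub_eq_add_neg, g_add_right, g_neg_right, sub_eq_add_neg]

theorem g_ext {X Y : Derivation ℝ C C} (h : ∀ U, K.g X U = K.g Y U) : X = Y := by
  rw [← sub_eq_zero]
  apply K.g_nondeg
  intro U
  rw [g_sub_left, h, sub_self]

theorem phi_add (X Y : Derivation ℝ C C) : K.φ (X + Y) = K.φ X + K.φ Y := by
  simpa using K.phi_linear 1 X Y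

theorem phi_zero : K.φ 0 = 0 := by
  have := K.phi_add 0 0
  simpa using this

theorem phi_smul (f : C) (X : Derivation ℝ C C) : K.φ (f • X) = f • K.φ X := by
  simpa [phi_zero] using K.phi_linear f X 0

theorem phi_neg (X : Derivation ℝ C C) : K.φ (-X) = - K.φ X := by
  simpa using K.phi_smul (-1) X

theorem phi_sub (X Y : Derivation ℝ C C) : K.φ (X - Y) = K.φ X - K.φ Y := by
  rw [sub_eq_add_neg, phi_add, phi_neg, sub_eq_add_neg]

theorem nabla_neg_left (X Y : Derivation ℝ C C) : K.nabla (-X) Y = - K.nabla X Y := by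
  simpa using K.nabla_smul_left (-1) X Y

theorem nabla_sub_left (X Y Z : Derivation ℝ C C) :
    K.nabla (X - Y) Z = K.nabla X Z - K.nabla Y Z := by
  rw [sub_eq_add_neg, K.nabla_add_left, nabla_neg_left, sub_eq_add_neg]

theorem nabla_neg_right (X Y : Derivation ℝ C C) : K.nabla X (-Y) = - K.nabla X Y := by
  simpa using K.nabla_leibniz X (-1) Y

theorem nabla_sub_right (X Y Z : Derivation ℝ C C) :
    K.nabla X (Y - Z) = K.nabla X Y - K.nabla X Z := by
  rw [sub_eq_add_neg, K.nabla_add_right, nabla_neg_right, sub_eq_add_neg]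

theorem frame_pair (X Y : Derivation ℝ C C) :
    ∑ i, K.g X (K.e i) * K.g Y (K.e i) = K.g X Y := by
  let G : Derivation ℝ C C →+ C :=
    { toFun := fun Z => K.g Z Y, map_zero' := K.g_zero_left Y,
      map_add' := fun a b => K.g_add_left a b Y }
  have : K.g X Y = G (∑ i, K.g X (K.e i) • K.e i) := by
    rw [← K.frame_span X]; rfl
  rw [this, map_sum]
  refine Finset.sum_congr rfl fun i _ => ?_
  change _ = K.g (K.g X (K.e i) • K.e i) Y
  rw [K.g_smul_left, K.g_symm (K.e i)]

/-- trace of a bilinear form against a skew operator on the frame -/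
theorem trace_skew (F : Derivation ℝ C C →ₗ[C] Derivation ℝ C C →ₗ[C] C)
    (A : Fin (2 * n + 1) → Derivation ℝ C C)
    (hA : ∀ i j, K.g (A i) (K.e j) = - K.g (A j) (K.e i)) :
    ∑ i, F (A i) (K.e i) = - ∑ i, F (K.e i) (A i) := by
  have h1 : ∑ i, F (A i) (K.e i) = ∑ i, ∑ j, K.g (A i) (K.e j) * F (K.e j) (K.e i) := by
    refine Finset.sum_congr rfl fun i _ => ?_
    conv_lhs => rw [K.frame_span (A i)]
    simp
  have h2 : ∑ i, F (K.e i) (A i) = ∑ i, ∑ j, K.g (A i) (K.e j) * F (K.e i) (K.e j) := by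
    refine Finset.sum_congr rfl fun i _ => ?_
    conv_lhs => rw [K.frame_span (A i)]
    simp
  rw [h1, h2, Finset.sum_comm, ← Finset.sum_neg_distrib]
  refine Finset.sum_congr rfl fun i _ => ?_
  rw [← Finset.sum_neg_distrib]
  refine Finset.sum_congr rfl fun j _ => ?_
  rw [hA j i]; ring

theorem g_xi_xi : K.g K.ξ K.ξ = 1 := by rw [← K.eta_def, K.eta_xi]

theorem sum_gee : ∑ i, K.g (K.e i) (K.e i) = 2 * (n : C) + 1 := by
  simp [K.g_frame]

theorem nabla_xi_xi (X : Derivation ℝ C C) : K.g (K.nabla X K.ξ) K.ξ = 0 := by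
  have h := K.metric_compat X K.ξ K.ξ
  rw [g_xi_xi, K.g_symm K.ξ, Derivation.map_one_eq_zero] at h
  exact two_cancel _ (by linear_combination -h)

theorem phi_xi (hn : 1 < n) : K.φ K.ξ = 0 := by
  obtain ⟨a, ha⟩ : ∃ a, a = K.g (K.φ K.ξ) K.ξ := ⟨_, rfl⟩
  have e1 : K.φ K.ξ = a • K.ξ := by
    have h1 := K.phi_phi (K.φ K.ξ)
    rw [K.phi_phi K.ξ, K.eta_xi, one_smul, neg_add_cancel, phi_zero, K.eta_def, ← ha] at h1
    linear_combination (norm := module) h1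
  have e2 : ∀ X, K.g (K.φ X) K.ξ = a * K.g X K.ξ := by
    intro X
    have h1 := K.phi_phi (K.φ X)
    rw [K.phi_phi X, phi_add, phi_neg, phi_smul, e1, K.eta_def, K.eta_def] at h1
    have h2 := congrArg (fun Z => K.g Z K.ξ) h1
    simp only [K.g_add_left, g_neg_left, K.g_smul_left, g_xi_xi] at h2
    linear_combination -h2
  have e3 : a * a = 0 := by
    have := K.compat_phi K.ξ K.ξ
    rw [e1, K.eta_xi, K.g_smul_left, g_smul_right, g_xi_xi] at this
    linear_combination this
  have e4 : ∀ X Y, K.g (K.φ X) Y + K.g X (K.φ Y) = 2 * a * K.g X K.ξ * K.g Y K.ξ := by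
    intro X Y
    have h1 := K.compat_phi X (K.φ Y)
    rw [K.phi_phi, g_add_right, g_neg_right, g_smul_right, e2, K.eta_def, K.eta_def, K.eta_def,
      e2] at h1
    linear_combination -h1
  have e5 : ∀ X, K.nabla X (a • K.ξ) - K.φ (K.nabla X K.ξ)
      = (a * K.g X K.ξ) • K.ξ - K.φ X := by
    intro X
    have := K.kenmotsu X K.ξ
    rwa [e1, e2, K.eta_xi, one_smul] at this
  have e6 : ∀ X : Derivation ℝ C C, X a = 0 := by
    intro X
    have h2 := congrArg (fun Z => K.g Z K.ξ) (e5 X)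
    simp only [K.nabla_leibniz, g_sub_left, K.g_add_left, K.g_smul_left, g_xi_xi, e2,
      nabla_xi_xi] at h2
    linear_combination h2
  have e7 : ∀ X Y, a * K.g (K.nabla X K.ξ) Y = 0 := by
    intro X Y
    have h1 := congrArg X (e4 Y K.ξ)
    have h2 := congrArg (fun Z => K.g Z K.ξ) (K.kenmotsu X Y)
    have h3 := congrArg (fun Z => K.g Y Z) (K.kenmotsu X K.ξ)
    have h4 := e4 (K.nabla X Y) K.ξ
    have h5 := e4 Y (K.nabla X K.ξ)
    rw [map_add, K.metric_compat, K.metric_compat] at h1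
    simp only [g_sub_left, g_sub_right, K.g_smul_left, g_smul_right, K.eta_def, g_xi_xi] at h2 h3
    have h6 : X (2 * a * K.g Y K.ξ * K.g K.ξ K.ξ)
      = 2 * a * (K.g (K.nabla X Y) K.ξ + K.g Y (K.nabla X K.ξ)) := by
      have t : (2 : C) * a * K.g Y K.ξ * K.g K.ξ K.ξ = a * K.g Y K.ξ + a * K.g Y K.ξ := by
        rw [g_xi_xi]; ring
      rw [t, map_add, der_mul, e6, K.metric_compat]; ring
    rw [h6] at h1
    rw [nabla_xi_xi] at h5
    rw [g_xi_xi] at h4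
    have h7 : K.g Y (K.φ X) = K.g (K.φ X) Y := K.g_symm _ _
    rw [K.g_symm _ Y]
    refine two_cancel _ ?_
    linear_combination -h1 + h2 + h3 + h4 + h5 - h7
  have e8 : ∀ X Y, a * (K.g X Y - K.g X K.ξ * K.g Y K.ξ) = 0 := by
    intro X Y
    have h2 := congrArg (fun Z => K.g Z (K.φ Y)) (e5 X)
    simp only [K.nabla_leibniz, g_sub_left, K.g_add_left, K.g_smul_left, e6, K.compat_phi,
      K.eta_def, nabla_xi_xi] at h2
    have h3 : K.g K.ξ (K.φ Y) = a * K.g Y K.ξ := by rw [K.g_symm, e2]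
    rw [h3] at h2
    linear_combination a * h2 - a * e7 X (K.φ Y) + e7 X Y
      + a * K.g X K.ξ * K.g Y K.ξ * e3
  have e9 : (2 * n : ℕ) * a = 0 := by
    have h1 : ∑ i, a * (K.g (K.e i) (K.e i) - K.g (K.e i) K.ξ * K.g (K.e i) K.ξ) = 0 :=
      Finset.sum_eq_zero fun i _ => e8 _ _
    rw [← Finset.mul_sum, Finset.sum_sub_distrib, sum_gee] at h1
    simp only [K.g_symm _ K.ξ] at h1
    rw [frame_pair, g_xi_xi] at h1
    push_cast
    linear_combination h1
  rw [e1, nat_cancel _ (by omega) _ e9, zero_smul]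

theorem eta_phi (hn : 1 < n) (X : Derivation ℝ C C) : K.g (K.φ X) K.ξ = 0 := by
  have h1 := K.phi_phi (K.φ X)
  rw [K.phi_phi X, phi_add, phi_neg, phi_smul, K.phi_xi hn, K.eta_def, K.eta_def] at h1
  have h2 := congrArg (fun Z => K.g Z K.ξ) h1
  simp only [K.g_add_left, g_neg_left, K.g_smul_left, g_xi_xi, smul_zero, add_zero] at h2
  linear_combination -h2

theorem phi_skew (hn : 1 < n) (X Y : Derivation ℝ C C) : K.g (K.φ X) Y = - K.g X (K.φ Y) := by
  have h1 := K.compat_phi X (K.φ Y)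
  rw [K.phi_phi, g_add_right, g_neg_right, g_smul_right, K.eta_phi hn, K.eta_def, K.eta_def,
    K.eta_def, K.eta_phi hn] at h1
  linear_combination -h1

theorem nabla_xi (hn : 1 < n) (X : Derivation ℝ C C) :
    K.nabla X K.ξ = X - K.g X K.ξ • K.ξ := by
  have h := K.kenmotsu X K.ξ
  have z : K.nabla X 0 = 0 := by simpa using K.nabla_leibniz X 0 0
  rw [K.phi_xi hn, z, K.eta_phi hn, K.eta_xi, zero_smul, one_smul] at h
  have h2 := congrArg K.φ h
  rw [phi_sub, phi_sub, phi_zero, K.phi_phi, K.phi_phi, K.eta_def, nabla_xi_xi, K.eta_def] at h2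
  linear_combination (norm := module) h2

theorem nabla_phi (X Y : Derivation ℝ C C) :
    K.nabla X (K.φ Y) = K.φ (K.nabla X Y) + K.g (K.φ X) Y • K.ξ - K.g Y K.ξ • K.φ X := by
  have h := K.kenmotsu X Y
  rw [K.eta_def] at h
  linear_combination (norm := module) h

theorem der_eta (hn : 1 < n) (X Y : Derivation ℝ C C) :
    X (K.g Y K.ξ) = K.g (K.nabla X Y) K.ξ + K.g X Y - K.g X K.ξ * K.g Y K.ξ := by
  rw [K.metric_compat, K.nabla_xi hn, g_sub_right, g_smul_right, K.g_symm Y X]; ring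

/-! curvature -/

theorem Rm_swap (X Y Z : Derivation ℝ C C) : K.Rm Y X Z = - K.Rm X Y Z := by
  unfold Rm
  rw [← lie_skew X Y, nabla_neg_left]
  abel

theorem Rm_add1 (X X' Y Z : Derivation ℝ C C) : K.Rm (X + X') Y Z = K.Rm X Y Z + K.Rm X' Y Z := by
  unfold Rm
  simp only [add_lie, K.nabla_add_left, K.nabla_add_right]
  abel

theorem Rm_smul1 (f : C) (X Y Z : Derivation ℝ C C) : K.Rm (f • X) Y Z = f • K.Rm X Y Z := by
  unfold Rm
  simp only [bracket_smul_left, nabla_sub_left, K.nabla_smul_left, K.nabla_leibniz]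
  module

theorem Rm_add3 (X Y Z Z' : Derivation ℝ C C) : K.Rm X Y (Z + Z') = K.Rm X Y Z + K.Rm X Y Z' := by
  unfold Rm
  simp only [K.nabla_add_right]
  abel

theorem Rm_smul3 (f : C) (X Y Z : Derivation ℝ C C) : K.Rm X Y (f • Z) = f • K.Rm X Y Z := by
  unfold Rm
  simp only [K.nabla_add_right, K.nabla_leibniz, Derivation.commutator_apply]
  module

theorem Rm_skew (X Y Z U : Derivation ℝ C C) : K.g (K.Rm X Y Z) U = - K.g Z (K.Rm X Y U) := by
  have h1 : X (Y (K.g Z U)) = K.g (K.nabla X (K.nabla Y Z)) U + K.g (K.nabla Y Z) (K.nabla X U)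
      + (K.g (K.nabla X Z) (K.nabla Y U) + K.g Z (K.nabla X (K.nabla Y U))) := by
    rw [K.metric_compat Y, map_add, K.metric_compat X, K.metric_compat X]
  have h2 : Y (X (K.g Z U)) = K.g (K.nabla Y (K.nabla X Z)) U + K.g (K.nabla X Z) (K.nabla Y U)
      + (K.g (K.nabla Y Z) (K.nabla X U) + K.g Z (K.nabla Y (K.nabla X U))) := by
    rw [K.metric_compat X, map_add, K.metric_compat Y, K.metric_compat Y]
  have h3 := K.metric_compat ⁅X, Y⁆ Z U
  rw [Derivation.commutator_apply] at h3
  unfold Rm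
  simp only [g_sub_left, g_sub_right]
  linear_combination -h1 + h2 + h3

theorem Rm_bianchi (X Y Z : Derivation ℝ C C) :
    K.Rm X Y Z + K.Rm Y Z X + K.Rm Z X Y = 0 := by
  have h1 := K.torsion_free X ⁅Y, Z⁆
  have h2 := K.torsion_free Y ⁅Z, X⁆
  have h3 := K.torsion_free Z ⁅X, Y⁆
  have h4 := lie_jacobi X Y Z
  have t1 := congrArg (K.nabla X) (K.torsion_free Y Z)
  have t2 := congrArg (K.nabla Y) (K.torsion_free Z X)
  have t3 := congrArg (K.nabla Z) (K.torsion_free X Y)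
  rw [nabla_sub_right] at t1 t2 t3
  unfold Rm
  linear_combination (norm := module) h1 + h2 + h3 + h4 + t1 + t2 + t3

theorem Rm_xi (hn : 1 < n) (X Y : Derivation ℝ C C) :
    K.Rm X Y K.ξ = K.g X K.ξ • Y - K.g Y K.ξ • X := by
  unfold Rm
  simp only [K.nabla_xi hn, nabla_sub_right, K.nabla_leibniz, K.der_eta hn, ← K.torsion_free,
    g_sub_left]
  rw [K.g_symm Y X]
  module

/-- The Kähler part of the curvature. -/
def Rt (X Y Z : Derivation ℝ C C) : Derivation ℝ C C :=
  K.Rm X Y Z + K.g Y Z • X - K.g X Z • Y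

theorem Rt_phi (hn : 1 < n) (X Y Z : Derivation ℝ C C) :
    K.Rt X Y (K.φ Z) = K.φ (K.Rt X Y Z) := by
  unfold Rt Rm
  simp only [nabla_phi, nabla_sub_right, K.nabla_add_right, K.nabla_leibniz, K.der_eta hn,
    ← K.torsion_free, phi_add, phi_sub, phi_smul, K.phi_skew hn, nabla_sub_left,
    K.nabla_xi hn, K.metric_compat, g_add_right, g_sub_right, g_sub_left, g_smul_right, map_neg]
  have a1 : K.g X (K.φ Y) = - K.g Y (K.φ X) := by rw [← K.phi_skew hn, K.g_symm]
  rw [a1]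
  module

theorem Rt_swap (X Y Z : Derivation ℝ C C) : K.Rt Y X Z = - K.Rt X Y Z := by
  unfold Rt
  rw [Rm_swap]; module

theorem Rt_skew (X Y Z U : Derivation ℝ C C) : K.g (K.Rt X Y Z) U = - K.g (K.Rt X Y U) Z := by
  unfold Rt
  simp only [g_sub_left, K.g_add_left, K.g_smul_left]
  rw [Rm_skew, K.g_symm Z (K.Rm X Y U)]
  ring

theorem Rt_bianchi (X Y Z : Derivation ℝ C C) :
    K.Rt X Y Z + K.Rt Y Z X + K.Rt Z X Y = 0 := by
  have := K.Rm_bianchi X Y Z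
  unfold Rt
  rw [K.g_symm Z X, K.g_symm Y X, K.g_symm Z Y]
  linear_combination (norm := module) this

theorem Rt_pair (X Y Z U : Derivation ℝ C C) : K.g (K.Rt X Y Z) U = K.g (K.Rt Z U X) Y := by
  have b : ∀ X Y Z U, K.g (K.Rt X Y Z) U + K.g (K.Rt Y Z X) U + K.g (K.Rt Z X Y) U = 0 := by
    intro X Y Z U
    rw [← K.g_add_left, ← K.g_add_left, Rt_bianchi, g_zero_left]
  have s : ∀ X Y Z U, K.g (K.Rt X Y Z) U = - K.g (K.Rt Y X Z) U := by
    intro X Y Z U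
    rw [Rt_swap, g_neg_left]
  refine sub_eq_zero.1 (two_cancel _ ?_)
  have k := K.Rt_skew
  linear_combination b Y Z X U + b Z X U Y + b X U Y Z + b U Y Z X - k Y Z X U - k Z X Y U
    - k X U Z Y - k U Y X Z - s U Z X Y - s Y X U Z + k X Y U Z - k Z U Y X

theorem Rt_inv2 (hn : 1 < n) (X Y Z U : Derivation ℝ C C) :
    K.g (K.Rt X Y (K.φ Z)) (K.φ U) = K.g (K.Rt X Y Z) U := by
  rw [K.Rt_phi hn, K.compat_phi, K.eta_def, Rt_skew K X Y Z K.ξ]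
  have : K.Rt X Y K.ξ = 0 := by
    unfold Rt
    rw [K.Rm_xi hn]; module
  rw [this, g_zero_left]; ring

theorem Rt_inv1 (hn : 1 < n) (X Y Z U : Derivation ℝ C C) :
    K.g (K.Rt (K.φ X) (K.φ Y) Z) U = K.g (K.Rt X Y Z) U := by
  rw [Rt_pair, K.Rt_inv2 hn, Rt_pair]

/-! Ricci form -/

theorem sum_phi (hn : 1 < n) (X Y : Derivation ℝ C C) :
    ∑ i, K.g (K.Rt (K.φ (K.e i)) X Y) (K.e i) = ∑ i, K.g (K.Rt (K.e i) X (K.φ Y)) (K.e i) := by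
  let F : Derivation ℝ C C →ₗ[C] Derivation ℝ C C →ₗ[C] C :=
    LinearMap.mk₂ C (fun a b => K.g (K.Rt a X Y) b)
      (by intro a a' b; simp only [Rt, Rm_add1, K.g_add_left, g_sub_left, K.g_smul_left]
          ring)
      (by intro c a b; simp only [Rt, Rm_smul1, K.g_add_left, g_sub_left, K.g_smul_left,
            smul_eq_mul]; ring)
      (by intro a b b'; rw [g_add_right])
      (by intro c a b; rw [g_smul_right, smul_eq_mul])
  have h := K.trace_skew F (fun i => K.φ (K.e i))
    (by intro i j; rw [K.phi_skew hn, K.g_symm])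
  change ∑ i, K.g (K.Rt (K.φ (K.e i)) X Y) (K.e i)
    = - ∑ i, K.g (K.Rt (K.e i) X Y) (K.φ (K.e i)) at h
  rw [h, ← Finset.sum_neg_distrib]
  refine Finset.sum_congr rfl fun i _ => ?_
  rw [K.Rt_phi hn, K.phi_skew hn]

theorem sum_Rt (X Y : Derivation ℝ C C) :
    ∑ i, K.g (K.Rt (K.e i) X Y) (K.e i) = K.S X Y + 2 * (n : C) * K.g X Y := by
  unfold Rt S
  simp only [g_sub_left, K.g_add_left, K.g_smul_left, Finset.sum_add_distrib,
    Finset.sum_sub_distrib, ← Finset.mul_sum, sum_gee]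
  have : ∑ i, K.g (K.e i) Y * K.g X (K.e i) = K.g X Y := by
    rw [← K.frame_pair]
    refine Finset.sum_congr rfl fun i _ => ?_
    rw [K.g_symm _ Y]; ring
  rw [this]; ring

/-- Ricci form (up to a factor) -/
def rho (X Y : Derivation ℝ C C) : C := ∑ i, K.g (K.Rm X Y (K.φ (K.e i))) (K.e i)

theorem rho_eq (hn : 1 < n) (X Y : Derivation ℝ C C) :
    K.rho X Y = K.S Y (K.φ X) - K.S X (K.φ Y) + (4 * (n : C) - 2) * K.g Y (K.φ X) := by
  have h1 : ∀ i, K.g (K.Rm X Y (K.φ (K.e i))) (K.e i)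
      = K.g (K.Rt (K.φ (K.e i)) Y X) (K.e i) - K.g (K.Rt (K.φ (K.e i)) X Y) (K.e i)
        + K.g (K.φ Y) (K.e i) * K.g X (K.e i) - K.g (K.φ X) (K.e i) * K.g Y (K.e i) := by
    intro i
    have b := congrArg (fun Z => K.g Z (K.e i)) (K.Rt_bianchi X Y (K.φ (K.e i)))
    simp only [K.g_add_left, g_zero_left] at b
    rw [K.Rt_swap (K.φ (K.e i)) Y, g_neg_left] at b
    have r : K.g (K.Rt X Y (K.φ (K.e i))) (K.e i) = K.g (K.Rm X Y (K.φ (K.e i))) (K.e i)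
       + K.g Y (K.φ (K.e i)) * K.g X (K.e i) - K.g X (K.φ (K.e i)) * K.g Y (K.e i) := by
      unfold Rt
      rw [g_sub_left, K.g_add_left, K.g_smul_left, K.g_smul_left]
    rw [K.phi_skew hn Y, K.phi_skew hn X]
    linear_combination b - r
  unfold rho
  simp only [h1, Finset.sum_add_distrib, Finset.sum_sub_distrib, K.sum_phi hn, sum_Rt, frame_pair]
  have a1 : K.g X (K.φ Y) = - K.g Y (K.φ X) := by rw [← K.phi_skew hn, K.g_symm]
  rw [K.phi_skew hn Y, K.g_symm (K.φ X), a1]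
  ring

theorem S_xi (hn : 1 < n) : K.S K.ξ K.ξ = - (2 * (n : C)) := by
  unfold S
  simp only [K.Rm_xi hn, g_sub_left, K.g_smul_left, g_xi_xi, Finset.sum_sub_distrib, one_mul,
    sum_gee]
  simp only [K.g_symm _ K.ξ, frame_pair, g_xi_xi]
  ring

theorem Rm_sub3 (X Y Z Z' : Derivation ℝ C C) : K.Rm X Y (Z - Z') = K.Rm X Y Z - K.Rm X Y Z' := by
  have h := K.Rm_smul3 (-1) X Y Z'
  rw [neg_one_smul, neg_one_smul] at h
  rw [sub_eq_add_neg, Rm_add3, h, sub_eq_add_neg]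

theorem nabla_frame_skew (X : Derivation ℝ C C) (i j : Fin (2 * n + 1)) :
    K.g (K.nabla X (K.e i)) (K.e j) = - K.g (K.nabla X (K.e j)) (K.e i) := by
  have h := K.metric_compat X (K.e i) (K.e j)
  have z : X (K.g (K.e i) (K.e j)) = 0 := by
    rw [K.g_frame]; split_ifs <;> simp
  rw [z, K.g_symm (K.e i)] at h
  linear_combination -h

theorem der_rho (X Y Z : Derivation ℝ C C) :
    X (K.rho Y Z) = ∑ i, K.g (K.nabla X (K.Rm Y Z (K.φ (K.e i)))
        - K.Rm Y Z (K.nabla X (K.φ (K.e i)))) (K.e i)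
      + 2 * K.g (K.Rm Y Z K.ξ) (K.φ X) := by
  let F : Derivation ℝ C C →ₗ[C] Derivation ℝ C C →ₗ[C] C :=
    LinearMap.mk₂ C (fun a b => K.g (K.Rm Y Z (K.φ a)) b)
      (by intro a a' b; simp only [phi_add, Rm_add3, K.g_add_left])
      (by intro c a b; simp only [phi_smul, Rm_smul3, K.g_smul_left, smul_eq_mul])
      (by intro a b b'; rw [g_add_right])
      (by intro c a b; rw [g_smul_right, smul_eq_mul])
  have h := K.trace_skew F (fun i => K.nabla X (K.e i)) (K.nabla_frame_skew X)
  change ∑ i, K.g (K.Rm Y Z (K.φ (K.nabla X (K.e i)))) (K.e i)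
    = - ∑ i, K.g (K.Rm Y Z (K.φ (K.e i))) (K.nabla X (K.e i)) at h
  have h2 : ∀ i, K.g (K.nabla X (K.Rm Y Z (K.φ (K.e i)))
        - K.Rm Y Z (K.nabla X (K.φ (K.e i)))) (K.e i) = K.g (K.nabla X (K.Rm Y Z (K.φ (K.e i)))) (K.e i)
        - K.g (K.Rm Y Z (K.φ (K.nabla X (K.e i)))) (K.e i)
        - K.g (K.φ X) (K.e i) * K.g (K.Rm Y Z K.ξ) (K.e i)
        + K.g K.ξ (K.e i) * K.g (K.Rm Y Z (K.φ X)) (K.e i) := by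
    intro i
    rw [nabla_phi, Rm_sub3, Rm_add3, Rm_smul3, Rm_smul3]
    simp only [g_sub_left, K.g_add_left, K.g_smul_left]
    rw [K.g_symm K.ξ]
    ring
  have h3 : X (K.rho Y Z) = ∑ i, K.g (K.nabla X (K.Rm Y Z (K.φ (K.e i)))) (K.e i)
    + ∑ i, K.g (K.Rm Y Z (K.φ (K.e i))) (K.nabla X (K.e i)) := by
    unfold rho
    simp only [map_sum, K.metric_compat, Finset.sum_add_distrib]
  have h4 : K.g K.ξ (K.Rm Y Z (K.φ X)) = - K.g (K.Rm Y Z K.ξ) (K.φ X) := by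
    rw [K.Rm_skew Y Z K.ξ]; ring
  rw [h3]
  simp only [h2, Finset.sum_add_distrib, Finset.sum_sub_distrib, frame_pair]
  rw [K.g_symm (K.φ X)]
  linear_combination h - h4

theorem bianchi2 (X Y Z W : Derivation ℝ C C) :
    (K.nabla X (K.Rm Y Z W) - K.Rm Y Z (K.nabla X W))
    + (K.nabla Y (K.Rm Z X W) - K.Rm Z X (K.nabla Y W))
    + (K.nabla Z (K.Rm X Y W) - K.Rm X Y (K.nabla Z W))
    = K.Rm ⁅X, Y⁆ Z W + K.Rm ⁅Y, Z⁆ X W + K.Rm ⁅Z, X⁆ Y W := by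
  have j : K.nabla ⁅⁅X, Y⁆, Z⁆ W + K.nabla ⁅⁅Y, Z⁆, X⁆ W + K.nabla ⁅⁅Z, X⁆, Y⁆ W = 0 := by
    rw [← K.nabla_add_left, ← K.nabla_add_left]
    have := lie_jacobi X Y Z
    have e : ⁅⁅X, Y⁆, Z⁆ + ⁅⁅Y, Z⁆, X⁆ + ⁅⁅Z, X⁆, Y⁆ = 0 := by
      rw [← lie_skew ⁅X, Y⁆ Z, ← lie_skew ⁅Y, Z⁆ X, ← lie_skew ⁅Z, X⁆ Y]
      linear_combination (norm := module) -this
    rw [e]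
    simpa using K.nabla_smul_left 0 0 W
  unfold Rm
  simp only [nabla_sub_right]
  linear_combination (norm := module) j

theorem d_rho (X Y Z : Derivation ℝ C C) :
    X (K.rho Y Z) + Y (K.rho Z X) + Z (K.rho X Y)
    = K.rho ⁅X, Y⁆ Z + K.rho ⁅Y, Z⁆ X + K.rho ⁅Z, X⁆ Y
      + 2 * K.g (K.Rm Y Z K.ξ) (K.φ X) + 2 * K.g (K.Rm Z X K.ξ) (K.φ Y)
      + 2 * K.g (K.Rm X Y K.ξ) (K.φ Z) := by
  rw [K.der_rho, K.der_rho, K.der_rho]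
  have h : (∑ i, K.g (K.nabla X (K.Rm Y Z (K.φ (K.e i)))
        - K.Rm Y Z (K.nabla X (K.φ (K.e i)))) (K.e i))
      + (∑ i, K.g (K.nabla Y (K.Rm Z X (K.φ (K.e i)))
        - K.Rm Z X (K.nabla Y (K.φ (K.e i)))) (K.e i))
      + (∑ i, K.g (K.nabla Z (K.Rm X Y (K.φ (K.e i)))
        - K.Rm X Y (K.nabla Z (K.φ (K.e i)))) (K.e i))
      = K.rho ⁅X, Y⁆ Z + K.rho ⁅Y, Z⁆ X + K.rho ⁅Z, X⁆ Y := by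
    unfold rho
    simp only [← Finset.sum_add_distrib, ← K.g_add_left, bianchi2]
  linear_combination h

theorem dbeta (hn : 1 < n) (β : C)
    (hr : ∀ X Y, K.rho X Y = 2 * (β + 1) * K.g X (K.φ Y)) (X : Derivation ℝ C C) :
    X β + 2 * β * K.g X K.ξ = 0 := by
  have sk : ∀ X Y, K.g X (K.φ Y) = - K.g Y (K.φ X) := by
    intro X Y; rw [← K.phi_skew hn, K.g_symm]
  have main : ∀ X Y Z : Derivation ℝ C C,
      (X β + 2 * β * K.g X K.ξ) * K.g Y (K.φ Z) + (Y β + 2 * β * K.g Y K.ξ) * K.g Z (K.φ X)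
      + (Z β + 2 * β * K.g Z K.ξ) * K.g X (K.φ Y) = 0 := by
    intro X Y Z
    have h := K.d_rho X Y Z
    have d : ∀ X Y Z : Derivation ℝ C C, X (2 * (β + 1) * K.g Y (K.φ Z))
        = 2 * X β * K.g Y (K.φ Z) + 2 * (β + 1) * (K.g (K.nabla X Y) (K.φ Z)
          + K.g Y (K.φ (K.nabla X Z)) + K.g (K.φ X) Z * K.g Y K.ξ
          - K.g Z K.ξ * K.g Y (K.φ X)) := by
      intro X Y Z
      have : (2 : C) * (β + 1) * K.g Y (K.φ Z)
        = (β + 1) * K.g Y (K.φ Z) + (β + 1) * K.g Y (K.φ Z) := by ring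
      rw [this]
      simp only [map_add, der_mul, K.metric_compat, nabla_phi, g_add_right, g_sub_right,
        g_smul_right, Derivation.map_one_eq_zero]
      ring
    simp only [hr, d, K.Rm_xi hn, ← K.torsion_free, g_sub_left, K.g_smul_left] at h
    rw [K.g_symm (K.φ X), K.g_symm (K.φ Y), K.g_symm (K.φ Z)] at h
    rw [sk Y (K.nabla X Z), sk Z (K.nabla Y X), sk X (K.nabla Z Y), sk Z Y, sk X Z, sk Y X] at h
    refine two_cancel _ ?_
    linear_combination h
  let θ : Derivation ℝ C C →ₗ[C] C :=
    { toFun := fun X => X β + 2 * β * K.g X K.ξ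
      map_add' := by intro a b; simp only [Derivation.add_apply, K.g_add_left]; ring
      map_smul' := by
        intro c a
        simp only [Derivation.smul_apply, K.g_smul_left, smul_eq_mul, RingHom.id_apply]; ring }
  have tr : ∀ X, ∑ i, K.g X (K.e i) * θ (K.e i) = θ X := by
    intro X
    conv_rhs => rw [K.frame_span X]
    simp
  have tr2 : ∀ X, ∑ i, K.g X (K.e i) * θ (K.φ (K.e i)) = θ (K.φ X) := by
    intro X
    let P : Derivation ℝ C C →ₗ[C] Derivation ℝ C C :=
      { toFun := K.φ, map_add' := K.phi_add, map_smul' := K.phi_smul }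
    change _ = θ (P X)
    conv_rhs => rw [K.frame_span X]
    simp only [map_sum, map_smul, smul_eq_mul]
    rfl
  have key : ∀ X, (2 * (n : C) - 2) * θ X + 2 * (K.g X K.ξ * θ K.ξ) = 0 := by
    intro X
    have h0 : ∀ i, θ X * (K.g (K.e i) (K.e i) - K.g K.ξ (K.e i) * K.g K.ξ (K.e i))
        + K.g (K.φ X) (K.e i) * θ (K.φ (K.e i)) - K.g X (K.e i) * θ (K.e i)
        + K.g X K.ξ * (K.g K.ξ (K.e i) * θ (K.e i)) = 0 := by
      intro i
      have h := main X (K.φ (K.e i)) (K.e i)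
      change θ X * _ + θ (K.φ (K.e i)) * _ + θ (K.e i) * _ = 0 at h
      rw [K.compat_phi, K.g_symm (K.e i) (K.φ X), K.phi_phi, g_add_right, g_neg_right,
        g_smul_right, K.eta_def] at h
      rw [K.g_symm K.ξ]
      linear_combination h
    have h1 := Finset.sum_eq_zero (s := Finset.univ) fun i _ => h0 i
    simp only [Finset.sum_add_distrib, Finset.sum_sub_distrib, ← Finset.mul_sum, frame_pair,
      sum_gee, tr, tr2, g_xi_xi] at h1
    rw [K.phi_phi, map_add, map_neg, map_smul, smul_eq_mul, K.eta_def] at h1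
    linear_combination h1
  have k1 : θ K.ξ = 0 := by
    refine nat_cancel (2 * n) (by omega) _ ?_
    have := key K.ξ
    rw [g_xi_xi] at this
    push_cast
    linear_combination this
  have k2 := key X
  rw [k1] at k2
  obtain ⟨m, rfl⟩ : ∃ m, n = m + 2 := ⟨n - 2, by omega⟩
  refine nat_cancel (2 * (m + 1)) (by omega) (θ X) ?_
  push_cast at k2 ⊢
  linear_combination k2

/-! Lie derivative part -/

/-- Lie derivative of the connection -/
def Lc (V X Y : Derivation ℝ C C) : Derivation ℝ C C :=
  ⁅V, K.nabla X Y⁆ - K.nabla ⁅V, X⁆ Y - K.nabla X ⁅V, Y⁆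

theorem Lc_symm (V X Y : Derivation ℝ C C) : K.Lc V X Y = K.Lc V Y X := by
  unfold Lc
  have h1 := congrArg (fun Z => ⁅V, Z⁆) (K.torsion_free X Y)
  simp only [lie_sub] at h1
  have h2 := K.torsion_free ⁅V, X⁆ Y
  have h3 := K.torsion_free X ⁅V, Y⁆
  have h4 := leibniz_lie V X Y
  linear_combination (norm := module) h1 - h2 - h3 + h4

theorem Lc_metric (V X Y Z : Derivation ℝ C C) :
    X (K.lieG V Y Z) - K.lieG V (K.nabla X Y) Z - K.lieG V Y (K.nabla X Z)
    = K.g (K.Lc V X Y) Z + K.g Y (K.Lc V X Z) := by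
  have h1 : V (X (K.g Y Z)) = V (K.g (K.nabla X Y) Z) + V (K.g Y (K.nabla X Z)) := by
    rw [K.metric_compat X Y Z, map_add]
  have h2 := K.metric_compat ⁅V, X⁆ Y Z
  rw [Derivation.commutator_apply] at h2
  have h3 := K.metric_compat X ⁅V, Y⁆ Z
  have h4 := K.metric_compat X Y ⁅V, Z⁆
  unfold lieG Lc
  simp only [map_sub, g_sub_left, g_sub_right]
  linear_combination h1 - h2 - h3 - h4

theorem Lc_koszul (V X Y Z : Derivation ℝ C C) :
    2 * K.g (K.Lc V X Y) Z
    = (X (K.lieG V Y Z) - K.lieG V (K.nabla X Y) Z - K.lieG V Y (K.nabla X Z))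
    + (Y (K.lieG V X Z) - K.lieG V (K.nabla Y X) Z - K.lieG V X (K.nabla Y Z))
    - (Z (K.lieG V X Y) - K.lieG V (K.nabla Z X) Y - K.lieG V X (K.nabla Z Y)) := by
  rw [Lc_metric, Lc_metric, Lc_metric, K.Lc_symm V Y X, K.Lc_symm V Z X, K.Lc_symm V Z Y,
    K.g_symm Y, K.g_symm X (K.Lc V Y Z)]
  ring

theorem Lc_curv (V X Y Z : Derivation ℝ C C) :
    ⁅V, K.Rm X Y Z⁆ - K.Rm ⁅V, X⁆ Y Z - K.Rm X ⁅V, Y⁆ Z - K.Rm X Y ⁅V, Z⁆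
    = K.nabla X (K.Lc V Y Z) + K.Lc V X (K.nabla Y Z) - K.nabla Y (K.Lc V X Z)
      - K.Lc V Y (K.nabla X Z) - K.Lc V ⁅X, Y⁆ Z := by
  unfold Rm Lc
  simp only [lie_sub, nabla_sub_right]
  rw [leibniz_lie V X Y, K.nabla_add_left]
  abel

theorem Lc_eq (hn : 1 < n) (V : Derivation ℝ C C) (β l : C) (hl : ∀ X : Derivation ℝ C C, X l = 0)
    (hb : ∀ X : Derivation ℝ C C, X β = - (2 * β * K.g X K.ξ))
    (hP : ∀ X Y, K.lieG V X Y
      = 2 * (β + 1 - l) * K.g X Y - 2 * (β + 1) * (K.g X K.ξ * K.g Y K.ξ))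
    (X Y : Derivation ℝ C C) :
    K.Lc V X Y = -(2 * β * K.g X K.ξ) • Y - (2 * β * K.g Y K.ξ) • X
      + (-(2 * K.g X Y) + (4 * β + 2) * (K.g X K.ξ * K.g Y K.ξ)) • K.ξ := by
  refine K.g_ext fun Z => ?_
  rw [← sub_eq_zero]
  refine two_cancel _ ?_
  have d : ∀ X Y Z : Derivation ℝ C C,
      X (K.lieG V Y Z) - K.lieG V (K.nabla X Y) Z - K.lieG V Y (K.nabla X Z)
      = -4 * β * K.g X K.ξ * K.g Y Z + 4 * β * K.g X K.ξ * (K.g Y K.ξ * K.g Z K.ξ)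
       - 2 * (β + 1) * ((K.g X Y - K.g X K.ξ * K.g Y K.ξ) * K.g Z K.ξ
         + K.g Y K.ξ * (K.g X Z - K.g X K.ξ * K.g Z K.ξ)) := by
    intro X Y Z
    have e1 : X (K.lieG V Y Z) = -(4 * β * K.g X K.ξ) * K.g Y Z
        + 2 * (β + 1 - l) * (K.g (K.nabla X Y) Z + K.g Y (K.nabla X Z))
        + 4 * β * K.g X K.ξ * (K.g Y K.ξ * K.g Z K.ξ)
        - 2 * (β + 1) * (X (K.g Y K.ξ) * K.g Z K.ξ + K.g Y K.ξ * X (K.g Z K.ξ)) := by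
      have t : K.lieG V Y Z = ((β + 1 - l) * K.g Y Z + (β + 1 - l) * K.g Y Z)
        - ((β + 1) * (K.g Y K.ξ * K.g Z K.ξ) + (β + 1) * (K.g Y K.ξ * K.g Z K.ξ)) := by
        rw [hP]; ring
      rw [t]
      simp only [map_add, map_sub, der_mul, hl, hb, Derivation.map_one_eq_zero]
      rw [K.metric_compat X Y Z]
      ring
    rw [e1, hP, hP, K.der_eta hn, K.der_eta hn]
    ring
  rw [mul_sub, Lc_koszul, d, d, d]
  simp only [K.g_add_left, g_sub_left, K.g_smul_left, g_neg_left]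
  rw [K.g_symm K.ξ Z, K.g_symm Z X, K.g_symm Z Y, K.g_symm Y X]
  ring

/-- constant curvature tensor -/
def K4 (X Y Z U : Derivation ℝ C C) : C := K.g Y Z * K.g X U - K.g X Z * K.g Y U

/-- Lie derivative of the lowered Kähler part -/
def LR (V X Y Z U : Derivation ℝ C C) : C :=
  V (K.g (K.Rt X Y Z) U) - K.g (K.Rt ⁅V, X⁆ Y Z) U - K.g (K.Rt X ⁅V, Y⁆ Z) U
    - K.g (K.Rt X Y ⁅V, Z⁆) U - K.g (K.Rt X Y Z) ⁅V, U⁆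

theorem LR_alt (hn : 1 < n) (V X Y Z U : Derivation ℝ C C) :
    K.LR V X Y Z U - K.LR V (K.φ X) (K.φ Y) Z U - K.LR V X Y (K.φ Z) (K.φ U)
      + K.LR V (K.φ X) (K.φ Y) (K.φ Z) (K.φ U) = 0 := by
  unfold LR
  simp only [K.Rt_inv1 hn, K.Rt_inv2 hn]
  ring

theorem LR_eq (hn : 1 < n) (V : Derivation ℝ C C) (β l : C) (hl : ∀ X : Derivation ℝ C C, X l = 0)
    (hb : ∀ X : Derivation ℝ C C, X β = - (2 * β * K.g X K.ξ))
    (hP : ∀ X Y, K.lieG V X Y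
      = 2 * (β + 1 - l) * K.g X Y - 2 * (β + 1) * (K.g X K.ξ * K.g Y K.ξ))
    (X Y Z U : Derivation ℝ C C) (hX : K.g X K.ξ = 0) (hY : K.g Y K.ξ = 0) (hZ : K.g Z K.ξ = 0)
    (hU : K.g U K.ξ = 0) :
    K.LR V X Y Z U = 2 * (β + 1 - l) * K.g (K.Rt X Y Z) U + (4 * β - 2 * l) * K.K4 X Y Z U := by
  have eta_n : ∀ X Y, K.g Y K.ξ = 0 → K.g (K.nabla X Y) K.ξ = K.g X K.ξ * K.g Y K.ξ - K.g X Y := by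
    intro X Y h
    have := K.der_eta hn X Y
    rw [h, map_zero] at this
    rw [h]
    linear_combination -this
  have hU' : K.g K.ξ U = 0 := by rw [K.g_symm, hU]
  have c := congrArg (fun W => K.g W U) (K.Lc_curv V X Y Z)
  have z : ∀ X, K.nabla X 0 = 0 := by
    intro X; simpa using K.nabla_leibniz X 0 0
  have L1 : ∀ X Y, K.g Y K.ξ = 0 → K.g Z K.ξ = 0 →
      K.g (K.nabla X (K.Lc V Y Z)) U = -(2 * K.g Y Z) * K.g X U := by
    intro X Y h1 h2
    have : K.Lc V Y Z = (-(2 * K.g Y Z)) • K.ξ := by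
      rw [K.Lc_eq hn V β l hl hb hP, h1, h2]; module
    rw [this, K.nabla_leibniz, K.nabla_xi hn]
    simp only [K.g_add_left, g_sub_left, K.g_smul_left, hU']
    ring
  have L2 : ∀ X Y, K.g X K.ξ = 0 → K.g (K.Lc V X (K.nabla Y Z)) U
      = 2 * β * K.g Y Z * K.g X U := by
    intro X Y h1
    rw [K.Lc_eq hn V β l hl hb hP, h1, eta_n Y Z hZ, hZ]
    simp only [K.g_add_left, g_sub_left, K.g_smul_left, hU', g_neg_left]
    ring
  have L3 : K.g (K.Lc V ⁅X, Y⁆ Z) U = 0 := by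
    rw [K.Lc_eq hn V β l hl hb hP, ← K.torsion_free, g_sub_left, eta_n X Y hY, eta_n Y X hX,
      hX, hY, hZ, K.g_symm Y X]
    simp only [K.g_add_left, g_sub_left, K.g_smul_left, hU', g_neg_left]
    ring
  simp only [K.g_add_left, g_sub_left, L3, L1 X Y hY hZ, L1 Y X hX hZ, L2 X Y hX, L2 Y X hY] at c
  have p1 := hP (K.Rm X Y Z) U
  have p2 := hP Y Z
  have p3 := hP X U
  have p4 := hP X Z
  have p5 := hP Y U
  rw [hU] at p1 p3 p5
  rw [hZ] at p2 p4
  unfold lieG at p1 p2 p3 p4 p5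
  unfold LR K4 Rt
  simp only [K.g_add_left, g_sub_left, K.g_smul_left, map_add, map_sub, der_mul]
  linear_combination p1 + c + K.g X U * p2 + K.g Y Z * p3 - K.g Y U * p4 - K.g X Z * p5

theorem beta_zero (hn : 1 < n) (V : Derivation ℝ C C) (β l : C)
    (hl : ∀ X : Derivation ℝ C C, X l = 0)
    (hb : ∀ X : Derivation ℝ C C, X β = - (2 * β * K.g X K.ξ))
    (hP : ∀ X Y, K.lieG V X Y
      = 2 * (β + 1 - l) * K.g X Y - 2 * (β + 1) * (K.g X K.ξ * K.g Y K.ξ)) : β = 0 := by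
  obtain ⟨a, ha⟩ : ∃ a, a = 4 * β - 2 * l := ⟨_, rfl⟩
  have e := K.eta_phi hn
  -- the constant curvature tensor is killed on the anti-invariant part
  have h1 : ∀ X Y Z U, K.g X K.ξ = 0 → K.g Y K.ξ = 0 → K.g Z K.ξ = 0 → K.g U K.ξ = 0 →
      a * (K.g Y Z * K.g X U - K.g X Z * K.g Y U - K.g (K.φ Y) Z * K.g (K.φ X) U
        + K.g (K.φ X) Z * K.g (K.φ Y) U) = 0 := by
    intro X Y Z U hX hY hZ hU
    have h := K.LR_alt hn V X Y Z U
    rw [K.LR_eq hn V β l hl hb hP _ _ _ _ hX hY hZ hU,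
      K.LR_eq hn V β l hl hb hP _ _ _ _ (e _) (e _) hZ hU,
      K.LR_eq hn V β l hl hb hP _ _ _ _ hX hY (e _) (e _),
      K.LR_eq hn V β l hl hb hP _ _ _ _ (e _) (e _) (e _) (e _),
      K.Rt_inv1 hn, K.Rt_inv1 hn, K.Rt_inv2 hn, ← ha] at h
    unfold K4 at h
    simp only [K.compat_phi, K.eta_def, hX, hY] at h
    have s : ∀ X Z, K.g X (K.φ Z) = - K.g (K.φ X) Z := by
      intro X Z; rw [K.phi_skew hn]; ring
    rw [s, s, s, s] at h
    refine two_cancel _ ?_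
    linear_combination h
  have h2 : ∀ i j, a * ((K.g (K.e j) (K.e j) - K.g K.ξ (K.e j) * K.g K.ξ (K.e j))
      * (K.g (K.e i) (K.e i) - K.g K.ξ (K.e i) * K.g K.ξ (K.e i))
      - (K.g (K.e i) (K.e j) - K.g K.ξ (K.e i) * K.g K.ξ (K.e j))
       * (K.g (K.e i) (K.e j) - K.g K.ξ (K.e i) * K.g K.ξ (K.e j))
      - K.g (K.φ (K.e i)) (K.e j) * K.g (K.φ (K.e i)) (K.e j)) = 0 := by
    intro i j
    have h := h1 (K.φ (K.e i)) (K.φ (K.e j)) (K.φ (K.e j)) (K.φ (K.e i)) (e _) (e _) (e _) (e _)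
    have q : ∀ X Y, K.g (K.φ (K.φ X)) (K.φ Y) = K.g (K.φ X) Y := by
      intro X Y
      rw [K.compat_phi, K.eta_def, e]; ring
    have q0 : ∀ X, K.g (K.φ X) X = 0 := by
      intro X
      refine two_cancel _ ?_
      have := K.phi_skew hn X X
      rw [K.g_symm X] at this
      linear_combination this
    have q1 : K.g (K.φ (K.e j)) (K.e i) = - K.g (K.φ (K.e i)) (K.e j) := by
      rw [K.phi_skew hn, K.g_symm]
    rw [q, q, q, q, q0, q0, q1] at h
    simp only [K.compat_phi, K.eta_def] at h
    rw [K.g_symm (K.e j) (K.e i), K.g_symm _ K.ξ, K.g_symm _ K.ξ] at h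
    linear_combination h
  have h3 : ∀ i, a * ((2 * (n : C) - 2) * (K.g (K.e i) (K.e i)
      - K.g K.ξ (K.e i) * K.g K.ξ (K.e i))) = 0 := by
    intro i
    have h := Finset.sum_eq_zero (s := Finset.univ) fun j _ => h2 i j
    have ex : ∀ j, a * ((K.g (K.e j) (K.e j) - K.g K.ξ (K.e j) * K.g K.ξ (K.e j))
      * (K.g (K.e i) (K.e i) - K.g K.ξ (K.e i) * K.g K.ξ (K.e i))
      - (K.g (K.e i) (K.e j) - K.g K.ξ (K.e i) * K.g K.ξ (K.e j))
       * (K.g (K.e i) (K.e j) - K.g K.ξ (K.e i) * K.g K.ξ (K.e j))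
      - K.g (K.φ (K.e i)) (K.e j) * K.g (K.φ (K.e i)) (K.e j))
      = a * ((K.g (K.e i) (K.e i) - K.g K.ξ (K.e i) * K.g K.ξ (K.e i)) * K.g (K.e j) (K.e j)
        - (K.g (K.e i) (K.e i) - K.g K.ξ (K.e i) * K.g K.ξ (K.e i))
          * (K.g K.ξ (K.e j) * K.g K.ξ (K.e j))
        - K.g (K.e i) (K.e j) * K.g (K.e i) (K.e j)
        + 2 * K.g K.ξ (K.e i) * (K.g (K.e i) (K.e j) * K.g K.ξ (K.e j))
        - K.g K.ξ (K.e i) * K.g K.ξ (K.e i) * (K.g K.ξ (K.e j) * K.g K.ξ (K.e j))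
        - K.g (K.φ (K.e i)) (K.e j) * K.g (K.φ (K.e i)) (K.e j)) := by
      intro j; ring
    simp only [ex] at h
    rw [← Finset.mul_sum] at h
    simp only [Finset.sum_add_distrib, Finset.sum_sub_distrib, ← Finset.mul_sum, frame_pair,
      sum_gee, g_xi_xi, K.compat_phi, K.eta_def] at h
    rw [K.g_symm (K.e i) K.ξ] at h
    linear_combination h
  have h4 : a * ((2 * (n : C) - 2) * (2 * (n : C))) = 0 := by
    have h := Finset.sum_eq_zero (s := Finset.univ) fun i _ => h3 i
    simp only [← Finset.mul_sum, Finset.sum_sub_distrib, frame_pair, sum_gee, g_xi_xi] at h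
    linear_combination h
  have h5 : a = 0 := by
    obtain ⟨m, rfl⟩ : ∃ m, n = m + 2 := ⟨n - 2, by omega⟩
    refine nat_cancel (2 * (m + 1) * (2 * (m + 2))) (by positivity) _ ?_
    push_cast at h4 ⊢
    linear_combination h4
  have h6 : K.ξ (β + β) = K.ξ l := by
    congr 1
    rw [← sub_eq_zero]
    refine two_cancel _ ?_
    linear_combination h5 - ha
  rw [map_add, hl, hb, g_xi_xi] at h6
  refine nat_cancel 4 (by norm_num) _ ?_
  push_cast
  linear_combination -h6

end Aux
end KenmotsuManifold

open KenmotsuManifold in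
/-- If an `η`-Einstein Kenmotsu manifold of dimension `2n+1 > 3`
admits a `*`-Ricci soliton, then it is Einstein with `S = -2n g`. -/
theorem stmt7 {n : ℕ} {C : Type*} [CommRing C] [Algebra ℝ C]
    (K : KenmotsuManifold n C) (hn : 1 < n) (hE : K.IsEtaEinstein)
    (V : Derivation ℝ C C) (l : ℝ) (h : K.IsStarRicciSoliton V l)
    (X Y : Derivation ℝ C C) :
    K.S X Y = (-(2 * (n : ℝ))) • K.g X Y := by
  obtain ⟨α, β, hS⟩ := hE
  have hα : α = - (2 * (n : C)) - β := by
    have h1 := K.S_xi hn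
    rw [hS, K.g_xi_xi, K.eta_xi] at h1
    linear_combination h1
  simp only [K.eta_def] at hS
  have hr : ∀ X Y, K.rho X Y = 2 * (β + 1) * K.g X (K.φ Y) := by
    intro X Y
    have a1 : K.g Y (K.φ X) = - K.g X (K.φ Y) := by rw [← K.phi_skew hn, K.g_symm]
    rw [K.rho_eq hn, hS, hS, K.eta_phi hn, K.eta_phi hn, hα, a1]
    ring
  have hb : ∀ X : Derivation ℝ C C, X β = - (2 * β * K.g X K.ξ) := by
    intro X
    linear_combination K.dbeta hn β hr X
  have hP : ∀ X Y, K.lieG V X Y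
      = 2 * (β + 1 - algebraMap ℝ C l) * K.g X Y - 2 * (β + 1) * (K.g X K.ξ * K.g Y K.ξ) := by
    intro X Y
    have h1 := h X Y
    have h2 : 2 * K.Sstar X Y = K.rho X (K.φ Y) := by
      unfold Sstar rho
      rw [Algebra.smul_def, ← mul_assoc, ← map_ofNat (algebraMap ℝ C) 2, ← map_mul]
      norm_num
    rw [h2, hr, K.phi_phi, g_add_right, g_neg_right, g_smul_right, K.eta_def, Algebra.smul_def,
      map_mul, map_ofNat] at h1
    linear_combination h1
  have h0 := K.beta_zero hn V β (algebraMap ℝ C l) (fun X => X.map_algebraMap l) hb hP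
  rw [hS, hα, h0, Algebra.smul_def, map_neg, map_mul, map_ofNat, map_natCast]
  ring
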